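/- arXiv:1901.04241 — 4 statements merged into one kernel-verified Lean document; each statement's English description precedes it below -/
import Mathlib

section
/- Let n ≥ 1, let ω be a primitive n-th root of unity in a field F, and let e_0, …, e_{n−1} ∈ F^n be the rows of the Fourier matrix. Let a and r be integers with 1 ≤ r ≤ n, and let C be the F-linear span of the r consecutive rows e_{a mod n}, e_{(a+1) mod n}, …, e_{(a+r−1) mod n} (wrap-around of indices permitted). Then dim_F C = r and every nonzero element of C has Hamming weight at least n − r + 1; that is, C is an (n, r, n−r+1) MDS code. -/
/-- Hamming weight of a vector: the number of nonzero coordinates. -/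
noncomputable def hWeight {F : Type*} [Field F] {n : ℕ} (v : Fin n → F) : ℕ :=
  open scoped Classical in
  (Finset.univ.filter fun m => v m ≠ 0).card

/-- The `i`-th row of the Fourier matrix built from `ω`: `(e_i)_m = ω^(i·m)`. -/
def fourierRow {F : Type*} [Field F] (n : ℕ) (ω : F) (i : ZMod n) : Fin n → F :=
  fun m => ω ^ (i.val * m.val)

/-!
Rows are characters, `e_{i+j} = e_i * e_j` pointwise, so consecutive rows are `e_a * x ^ i` for
`i < r`, where `x = (ω ^ m)_m` has distinct entries and `e_a` has no zero entry. Their span is thus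
a generalized Reed–Solomon code, and by the Vandermonde determinant a combination of these rows that
vanishes at `r` coordinates has only zero coefficients.
-/

section GeneralizedReedSolomon

variable {R ι : Type*} [CommRing R] [IsDomain R] {u x : ι → R} {r : ℕ}

theorem eq_zero_of_sum_smul_mul_pow_eq_zero_on {s : Finset ι} (hu : ∀ m ∈ s, u m ≠ 0)
    (hx : Set.InjOn x s) (hs : r ≤ s.card) {c : Fin r → R}
    (hc : ∀ m ∈ s, (∑ i, c i • (u * x ^ (i : ℕ))) m = 0) : c = 0 := by
  obtain ⟨e⟩ : Nonempty (Fin r ↪ s) := Function.Embedding.nonempty_of_card_le (by simpa using hs)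
  refine Matrix.eq_zero_of_forall_index_sum_pow_mul_eq_zero (f := fun j => x (e j))
    (hx.injective.comp e.injective) fun j => ?_
  have hfactor : u (e j) * ∑ i : Fin r, x (e j) ^ (i : ℕ) * c i = 0 := by
    rw [← hc (e j) (e j).2, Finset.sum_apply, Finset.mul_sum]
    refine Finset.sum_congr rfl fun i _ => ?_
    simp only [Pi.smul_apply, Pi.mul_apply, Pi.pow_apply, smul_eq_mul]
    ring
  exact (mul_eq_zero.mp hfactor).resolve_left (hu _ (e j).2)

variable [Fintype ι]

theorem linearIndependent_mul_pow (hu : ∀ m, u m ≠ 0) (hx : Function.Injective x)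
    (hr : r ≤ Fintype.card ι) :
    LinearIndependent R fun i : Fin r => u * x ^ (i : ℕ) := by
  refine Fintype.linearIndependent_iff.2 fun c hc => congrFun ?_
  exact eq_zero_of_sum_smul_mul_pow_eq_zero_on (s := Finset.univ) (fun m _ => hu m) hx.injOn hr
    fun m _ => congrFun hc m

theorem card_lt_add_hammingNorm_of_mem_span_mul_pow [DecidableEq R] (hu : ∀ m, u m ≠ 0)
    (hx : Function.Injective x) {v : ι → R}
    (hv : v ∈ Submodule.span R (Set.range fun i : Fin r => u * x ^ (i : ℕ))) (hv0 : v ≠ 0) :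
    Fintype.card ι < r + hammingNorm v := by
  obtain ⟨c, rfl⟩ := (Submodule.mem_span_range_iff_exists_fun R).1 hv
  set v := ∑ i, c i • (u * x ^ (i : ℕ))
  have hzeros : Finset.card {m | v m = 0} < r := by
    by_contra! hle
    have hc : c = 0 := eq_zero_of_sum_smul_mul_pow_eq_zero_on (fun m _ => hu m) hx.injOn hle
      fun m hm => (Finset.mem_filter.1 hm).2
    exact hv0 (by simp [v, hc])
  calc Fintype.card ι = Finset.card {m | v m = 0} + hammingNorm v :=
        (Finset.card_filter_add_card_filter_not _).symm
    _ < r + hammingNorm v := by gcongr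

end GeneralizedReedSolomon

section FourierRow

variable {F : Type*} [Field F] {n : ℕ} {ω : F}

theorem hWeight_eq_hammingNorm [DecidableEq F] (v : Fin n → F) : hWeight v = hammingNorm v := by
  unfold hWeight hammingNorm
  congr

theorem fourierRow_ne_zero (hω : ω ≠ 0) (i : ZMod n) (m : Fin n) : fourierRow n ω i m ≠ 0 :=
  pow_ne_zero _ hω

theorem fourierRow_add [NeZero n] (hω : ω ^ n = 1) (i j : ZMod n) :
    fourierRow n ω (i + j) = fourierRow n ω i * fourierRow n ω j := by
  ext m
  simp only [fourierRow, Pi.mul_apply, ZMod.val_add, pow_mul, ← pow_eq_pow_mod _ hω, pow_add,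
    mul_pow]

theorem fourierRow_natCast (hω : ω ^ n = 1) (k : ℕ) :
    fourierRow n ω (k : ZMod n) = (fun m : Fin n => ω ^ (m : ℕ)) ^ k := by
  ext m
  simp only [fourierRow, Pi.pow_apply, ZMod.val_natCast, pow_mul, ← pow_eq_pow_mod _ hω,
    pow_right_comm]

end FourierRow

/-- The span of `r` consecutive rows of the Fourier matrix
`e_{(a+i) mod n}`, `i = 0, …, r−1` (wrap-around permitted), has dimension `r` and every
nonzero element has Hamming weight at least `n − r + 1`: it is an `(n, r, n−r+1)` MDS code. -/
theorem span_consecutive_rows_MDS {F : Type*} [Field F] (n : ℕ) [NeZero n] (ω : F)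
    (hω1 : ω ^ n = 1) (hωprim : ∀ i : ℕ, 1 ≤ i → i < n → ω ^ i ≠ 1)
    (r : ℕ) (hr1 : 1 ≤ r) (hrn : r ≤ n) (a : ℤ)
    (C : Submodule F (Fin n → F))
    (hC : C = Submodule.span F (Set.range fun i : Fin r =>
      fourierRow n ω ((a : ZMod n) + ((i : ℕ) : ZMod n)))) :
    Module.finrank F C = r ∧ ∀ v ∈ C, v ≠ 0 → n - r + 1 ≤ hWeight v := by
  classical
  have hω : IsPrimitiveRoot ω n := (IsPrimitiveRoot.iff (NeZero.pos n)).2 ⟨hω1, hωprim⟩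
  have hx : Function.Injective fun m : Fin n => ω ^ (m : ℕ) :=
    fun m k hmk => Fin.ext (hω.pow_inj m.2 k.2 hmk)
  have hu : ∀ m, fourierRow n ω (a : ZMod n) m ≠ 0 :=
    fourierRow_ne_zero (hω.ne_zero (NeZero.ne n)) _
  simp only [fourierRow_add hω1, fourierRow_natCast hω1] at hC
  subst hC
  constructor
  · rw [finrank_span_eq_card (linearIndependent_mul_pow hu hx (by simpa using hrn)),
      Fintype.card_fin]
  · intro v hv hv0
    have hweight := card_lt_add_hammingNorm_of_mem_span_mul_pow hu hx hv hv0
    rw [Fintype.card_fin] at hweight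
    rw [hWeight_eq_hammingNorm]
    omega
end

section
/- Let n ≥ 1, let ω be a primitive n-th root of unity in a field F, and let e_0, …, e_{n−1} ∈ F^n be the rows of the Fourier matrix. Suppose S ⊆ {0, 1, …, n−1} satisfies: i ∈ S implies (n − i) mod n ∈ S. Then the code C spanned by {e_i : i ∈ S} satisfies C ∩ C^⊥ = {0}; that is, C is a linear complementary dual (LCD) code. -/
/-- The dual code of `C` with respect to the standard bilinear form. -/
def dualCode {F : Type*} [Field F] {n : ℕ} (C : Submodule F (Fin n → F)) :
    Submodule F (Fin n → F) where
  carrier := {v | ∀ u ∈ C, ∑ m, u m * v m = 0}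
  add_mem' := by
    intro a b ha hb u hu
    have h : ∑ m, u m * (a + b) m = (∑ m, u m * a m) + ∑ m, u m * b m := by
      rw [← Finset.sum_add_distrib]
      exact Finset.sum_congr rfl fun m _ => by simp [mul_add]
    rw [h, ha u hu, hb u hu, add_zero]
  zero_mem' := by intro u hu; simp
  smul_mem' := by
    intro c a ha u hu
    have h : ∑ m, u m * (c • a) m = c * ∑ m, u m * a m := by
      rw [Finset.mul_sum]
      exact Finset.sum_congr rfl fun m _ => by simp [smul_eq_mul]; ring
    rw [h, ha u hu, mul_zero]

open Matrix

theorem eq_zero_of_mem_span_image_of_pairwise_dual {ι R M : Type*} [Semiring R] [NoZeroDivisors R]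
    [AddCommMonoid M] [Module R M] {v : ι → M} {f : ι → M →ₗ[R] R} {s : Set ι}
    (hoff : s.Pairwise fun i j => f i (v j) = 0) (hdiag : ∀ i ∈ s, f i (v i) ≠ 0)
    {x : M} (hx : x ∈ Submodule.span R (v '' s)) (hfx : ∀ i ∈ s, f i x = 0) : x = 0 := by
  obtain ⟨c, hc, rfl⟩ := (Finsupp.mem_span_image_iff_linearCombination R).mp hx
  have hcs : ∀ i ∈ c.support, i ∈ s := fun i hi => hc hi
  have apply_eq : ∀ i ∈ s, f i (Finsupp.linearCombination R v c) = c i * f i (v i) := by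
    intro i hi
    simp only [Finsupp.linearCombination_apply, Finsupp.sum, map_sum, map_smul, smul_eq_mul]
    refine Finset.sum_eq_single i (fun j hj hji => ?_) fun hi' => ?_
    · rw [hoff hi (hcs j hj) hji.symm, mul_zero]
    · rw [Finsupp.notMem_support_iff.mp hi', zero_mul]
  have c_eq_zero : c = 0 := by
    ext i
    by_contra hci
    have hi : i ∈ s := hcs i (Finsupp.mem_support_iff.mpr hci)
    exact mul_ne_zero hci (hdiag i hi) ((apply_eq i hi).symm.trans (hfx i hi))
  rw [c_eq_zero, map_zero]

section FourierRow

variable {F : Type*} [Field F] {n : ℕ}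

theorem mem_dualCode_iff {C : Submodule F (Fin n → F)} {v : Fin n → F} :
    v ∈ dualCode C ↔ ∀ u ∈ C, u ⬝ᵥ v = 0 :=
  Iff.rfl

variable [NeZero n] {ω : F}

theorem fourierRow_apply_eq_zmodChar (hω : ω ^ n = 1) (i : ZMod n) (m : Fin n) :
    fourierRow n ω i m = AddChar.zmodChar n hω (ZMod.finEquiv n m * i) := by
  obtain _ | k := n
  · exact m.elim0
  · rw [← ZMod.natCast_zmod_val (ZMod.finEquiv (k + 1) m * i), AddChar.zmodChar_apply',
      ZMod.val_mul, ← pow_eq_pow_mod _ hω, mul_comm]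
    rfl

theorem fourierRow_dotProduct_fourierRow (hω : IsPrimitiveRoot ω n) (i j : ZMod n) :
    fourierRow n ω i ⬝ᵥ fourierRow n ω j = if i + j = 0 then (n : F) else 0 := by
  let ψ := AddChar.zmodChar n hω.pow_eq_one
  have hψ : ψ.IsPrimitive := AddChar.zmodChar_primitive_of_primitive_root n hω
  calc fourierRow n ω i ⬝ᵥ fourierRow n ω j
      = ∑ m : Fin n, ψ (ZMod.finEquiv n m * (i + j)) := by
        simp only [dotProduct, fourierRow_apply_eq_zmodChar hω.pow_eq_one, mul_add,
          AddChar.map_add_eq_mul, ψ]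
    _ = ∑ x : ZMod n, ψ (x * (i + j)) :=
        (ZMod.finEquiv n).toEquiv.sum_comp fun x => ψ (x * (i + j))
    _ = if i + j = 0 then (n : F) else 0 := by
        rw [AddChar.sum_mulShift _ hψ, ZMod.card, Nat.cast_ite, Nat.cast_zero]

end FourierRow

/-- If the index set `S` is closed under `i ↦ (n − i) mod n`, then the code
spanned by `{e_i : i ∈ S}` satisfies `C ∩ C^⊥ = {0}`: it is a linear complementary dual code. -/
theorem span_symmetric_rows_LCD {F : Type*} [Field F] (n : ℕ) [NeZero n] (ω : F)
    (hω1 : ω ^ n = 1) (hωprim : ∀ i : ℕ, 1 ≤ i → i < n → ω ^ i ≠ 1)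
    (S : Set (ZMod n)) (hS : ∀ i ∈ S, -i ∈ S) :
    Submodule.span F (fourierRow n ω '' S) ⊓
      dualCode (Submodule.span F (fourierRow n ω '' S)) = ⊥ := by
  have hω : IsPrimitiveRoot ω n := IsPrimitiveRoot.mk_of_lt ω (NeZero.pos n) hω1 hωprim
  have hn : (n : F) ≠ 0 := hω.neZero'.ne
  refine (Submodule.eq_bot_iff _).mpr fun v ⟨hv, hv_dual⟩ => ?_
  -- By symmetry of `S` the code contains the rows `e_{-i}`, `i ∈ S`, and pairing with them recovers
  -- `n` times the coefficients of `v` in the rows `e_i`.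
  refine eq_zero_of_mem_span_image_of_pairwise_dual
    (f := fun i => dotProductBilin F F (fourierRow n ω (-i))) ?_ ?_ hv ?_
  · intro i _ j _ hij
    simp [fourierRow_dotProduct_fourierRow hω, neg_add_eq_zero, hij]
  · intro i _
    simpa [fourierRow_dotProduct_fourierRow hω] using hn
  · intro i hi
    exact mem_dualCode_iff.mp hv_dual _ (Submodule.subset_span ⟨-i, hS i hi, rfl⟩)
end

section
/- Let n ≥ 1, let ω be a primitive n-th root of unity in a field F, and let e_0, …, e_{n−1} ∈ F^n be the rows of the Fourier matrix. Let k be an integer with gcd(k, n) = 1 and let r ≥ 0 satisfy 2r + 1 ≤ n. Let C be the F-linear span of the 2r+1 rows e_{(i·k) mod n} for i = −r, −r+1, …, −1, 0, 1, …, r. Then C is an LCD MDS code of length n, dimension 2r+1, and minimum distance n − 2r. -/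
/-- Minimum distance of a code: the least Hamming weight of a nonzero codeword. -/
noncomputable def minDist {F : Type*} [Field F] {n : ℕ} (C : Submodule F (Fin n → F)) : ℕ :=
  sInf {d | ∃ v ∈ C, v ≠ 0 ∧ hWeight v = d}

/-!
With `z = ω ^ k`, again a primitive `n`-th root of unity, the row `e_{ik}` is `m ↦ (z ^ m) ^ i`. The
code is therefore obtained by evaluating the Laurent polynomials with exponents in `[-r, r]`, that
is `X ^ (-r) * p` with `deg p < 2r + 1`, at the `n` distinct points `z ^ m`: it is a generalized
Reed–Solomon code, and the number of roots of `p` together with the Singleton bound gives its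
parameters.

The rows `e_i` and `e_j` are orthogonal unless `i + j = 0`. When the index set `S` is symmetric, a
vector in the span of the rows from `S` that is orthogonal to this span is orthogonal to `e_j` both
for `j ∈ S` and for `j ∉ S`, hence to every row, so it vanishes because the Fourier matrix is
invertible.
-/

section Codes

variable {F : Type*} [Field F] {n : ℕ}

theorem hWeight_zero : hWeight (0 : Fin n → F) = 0 := by
  simp [hWeight]

theorem hWeight_add_card_zeros [DecidableEq F] (v : Fin n → F) :
    hWeight v + (Finset.univ.filter fun m => v m = 0).card = n := by
  have h := Finset.card_filter_add_card_filter_not (s := Finset.univ) fun m => v m = 0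
  rw [Finset.card_fin, add_comm] at h
  convert h
  unfold hWeight
  congr!

theorem hWeight_add_card_le_of_forall_mem_eq_zero {v : Fin n → F} {s : Finset (Fin n)}
    (hv : ∀ m ∈ s, v m = 0) : hWeight v + s.card ≤ n := by
  classical
  have hs : s ⊆ Finset.univ.filter fun m => v m = 0 := fun m hm => by simpa using hv m hm
  have hzeros := hWeight_add_card_zeros v
  have := Finset.card_le_card hs
  omega

variable {C : Submodule F (Fin n → F)}

theorem minDist_le_hWeight {v : Fin n → F} (hv : v ∈ C) (hv0 : v ≠ 0) :
    minDist C ≤ hWeight v :=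
  Nat.sInf_le ⟨v, hv, hv0, rfl⟩

theorem exists_hWeight_eq_minDist (hC : C ≠ ⊥) : ∃ v ∈ C, v ≠ 0 ∧ hWeight v = minDist C := by
  obtain ⟨v, hv, hv0⟩ := C.exists_mem_ne_zero_of_ne_bot hC
  exact Nat.sInf_mem (s := {d | ∃ v ∈ C, v ≠ 0 ∧ hWeight v = d}) ⟨_, v, hv, hv0, rfl⟩

theorem exists_mem_ne_zero_forall_mem_eq_zero {s : Finset (Fin n)}
    (hs : s.card < Module.finrank F C) : ∃ v ∈ C, v ≠ 0 ∧ ∀ m ∈ s, v m = 0 := by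
  let restriction : C →ₗ[F] (s → F) := LinearMap.funLeft F F Subtype.val ∘ₗ C.subtype
  have hker : LinearMap.ker restriction ≠ ⊥ :=
    LinearMap.ker_ne_bot_of_finrank_lt (by simpa using hs)
  obtain ⟨v, hv, hv0⟩ := Submodule.exists_mem_ne_zero_of_ne_bot hker
  exact ⟨v, v.2, by simpa using hv0, fun m hm => congrFun hv ⟨m, hm⟩⟩

theorem minDist_add_finrank_le (hC : C ≠ ⊥) : minDist C + Module.finrank F C ≤ n + 1 := by
  have hpos : 0 < Module.finrank F C := Submodule.one_le_finrank_iff.mpr hC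
  have hle : Module.finrank F C ≤ n := by simpa using C.finrank_le
  obtain ⟨s, -, hs⟩ := Finset.exists_subset_card_eq
    (s := (Finset.univ : Finset (Fin n))) (n := Module.finrank F C - 1)
    (by rw [Finset.card_fin]; omega)
  obtain ⟨v, hv, hv0, hvs⟩ := exists_mem_ne_zero_forall_mem_eq_zero (C := C) (s := s) (by omega)
  have := minDist_le_hWeight hv hv0
  have := hWeight_add_card_le_of_forall_mem_eq_zero hvs
  omega

end Codes

section ReedSolomon

open Polynomial

variable {F : Type*} [Field F] {n : ℕ}

/-- The weighted evaluation map `p ↦ (w m * p (x m))_m` whose restriction to polynomials of bounded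
degree encodes a generalized Reed–Solomon code. -/
noncomputable def grsEval (w x : Fin n → F) : F[X] →ₗ[F] (Fin n → F) :=
  LinearMap.pi fun m => w m • leval (x m)

/-- The generalized Reed–Solomon code with column multipliers `w` and evaluation points `x`, made of
the weighted evaluations of the polynomials of degree less than `d`. That the multipliers are
nonzero and the points distinct is left to the lemmas. -/
noncomputable def grsCode (w x : Fin n → F) (d : ℕ) : Submodule F (Fin n → F) :=
  (degreeLT F d).map (grsEval w x)

@[simp]
theorem grsEval_apply (w x : Fin n → F) (p : F[X]) (m : Fin n) :
    grsEval w x p m = w m * p.eval (x m) := rfl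

variable {w x : Fin n → F} {d : ℕ}

theorem lt_hWeight_grsEval_add (hw : ∀ m, w m ≠ 0) (hx : Function.Injective x) {p : F[X]}
    (hp : p ∈ degreeLT F d) (hp0 : p ≠ 0) : n < hWeight (grsEval w x p) + d := by
  classical
  have hzeros : (Finset.univ.filter fun m => grsEval w x p m = 0).card < d := by
    by_contra! hd
    have hdeg := (mem_degreeLT.mp hp).trans_le (Nat.cast_le.mpr hd)
    refine hp0 (eq_zero_of_degree_lt_of_eval_index_eq_zero _ hx.injOn hdeg fun m hm => ?_)
    simpa [hw m] using hm
  have := hWeight_add_card_zeros (grsEval w x p)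
  omega

theorem disjoint_degreeLT_ker_grsEval (hw : ∀ m, w m ≠ 0) (hx : Function.Injective x)
    (hd : d ≤ n) : Disjoint (degreeLT F d) (LinearMap.ker (grsEval w x)) := by
  refine Submodule.disjoint_def.mpr fun p hp hker => by_contra fun hp0 => ?_
  have := lt_hWeight_grsEval_add hw hx hp hp0
  rw [LinearMap.mem_ker.mp hker, hWeight_zero] at this
  omega

theorem finrank_grsCode (hw : ∀ m, w m ≠ 0) (hx : Function.Injective x) (hd : d ≤ n) :
    Module.finrank F (grsCode w x d) = d := by
  have hinj : Function.Injective ((grsEval w x).domRestrict (degreeLT F d)) :=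
    LinearMap.injective_domRestrict_iff.mpr (disjoint_degreeLT_ker_grsEval hw hx hd)
  rw [grsCode, ← LinearMap.range_domRestrict, LinearMap.finrank_range_of_inj hinj,
    (degreeLTEquiv F d).finrank_eq, Module.finrank_fin_fun]

theorem minDist_grsCode (hw : ∀ m, w m ≠ 0) (hx : Function.Injective x) (hd0 : 0 < d)
    (hd : d ≤ n) : minDist (grsCode w x d) = n - d + 1 := by
  have hrank := finrank_grsCode hw hx hd
  have hne : grsCode w x d ≠ ⊥ := Submodule.one_le_finrank_iff.mp (by omega)
  have hsingleton := minDist_add_finrank_le hne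
  obtain ⟨_, ⟨p, hp, rfl⟩, hv0, hv⟩ := exists_hWeight_eq_minDist hne
  have := lt_hWeight_grsEval_add hw hx hp fun h => hv0 (by rw [h, map_zero])
  omega

end ReedSolomon

section FourierRows

theorem injective_pow_val_of_isPrimitiveRoot {M : Type*} [CommMonoid M] {n : ℕ} {z : M}
    (hz : IsPrimitiveRoot z n) : Function.Injective fun m : Fin n => z ^ m.val :=
  fun i j hij => Fin.ext (hz.pow_inj i.2 j.2 hij)

variable {F : Type*} [Field F] {n : ℕ} {ω : F}

theorem eq_zero_of_forall_sum_fourierRow_mul_eq_zero (hω : IsPrimitiveRoot ω n) {v : Fin n → F}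
    (hv : ∀ i, ∑ m, fourierRow n ω i m * v m = 0) : v = 0 := by
  refine Matrix.eq_zero_of_forall_index_sum_pow_mul_eq_zero
    (injective_pow_val_of_isPrimitiveRoot hω) fun i => ?_
  simpa [fourierRow, pow_mul, ZMod.val_natCast_of_lt i.2] using hv (i.val : ZMod n)

variable [NeZero n]

theorem fourierRow_intCast_apply (hω : ω ^ n = 1) (i : ℤ) (m : Fin n) :
    fourierRow n ω (i : ZMod n) m = ω ^ (i * m) := by
  have hω0 : ω ≠ 0 := (IsUnit.of_pow_eq_one hω (NeZero.ne n)).ne_zero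
  have hval : ω ^ (i : ZMod n).val = ω ^ i := by
    rw [← zpow_natCast, ZMod.val_intCast]
    conv_rhs => rw [← Int.emod_add_mul_ediv i n, zpow_add₀ hω0, zpow_mul, zpow_natCast ω n, hω,
      one_zpow, mul_one]
  rw [fourierRow, pow_mul, hval, zpow_mul, zpow_natCast]

theorem fourierRow_arith_eq_grsEval_X_pow (hω : ω ^ n = 1) (k a : ℤ) (j : ℕ) :
    fourierRow n ω (((a + j) * k : ℤ) : ZMod n) =
      grsEval (fun m => ((ω ^ k) ^ m.val) ^ a) (fun m => (ω ^ k) ^ m.val) (Polynomial.X ^ j) := by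
  have hω0 : ω ≠ 0 := (IsUnit.of_pow_eq_one hω (NeZero.ne n)).ne_zero
  ext m
  rw [fourierRow_intCast_apply hω, grsEval_apply, Polynomial.eval_pow, Polynomial.eval_X,
    ← zpow_natCast _ j, ← zpow_add₀ (pow_ne_zero _ (zpow_ne_zero _ hω0)), ← zpow_natCast,
    ← zpow_mul, ← zpow_mul]
  ring_nf

theorem span_fourierRow_arith_eq_grsCode (hω : ω ^ n = 1) (k a : ℤ) (d : ℕ) :
    Submodule.span F (fourierRow n ω '' ((fun i : ℤ => ((i * k : ℤ) : ZMod n)) ''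
      Set.Ico a (a + d))) =
      grsCode (fun m => ((ω ^ k) ^ m.val) ^ a) (fun m => (ω ^ k) ^ m.val) d := by
  have hIco : Set.Ico a (a + d) = (fun j : ℕ => a + j) '' Set.Iio d := by
    ext i
    refine ⟨fun hi => ⟨(i - a).toNat, ?_⟩, ?_⟩
    · simp only [Set.mem_Ico, Set.mem_Iio] at hi ⊢
      omega
    · rintro ⟨j, hj, rfl⟩
      simp only [Set.mem_Ico, Set.mem_Iio] at hj ⊢
      omega
  classical
  rw [grsCode, Polynomial.degreeLT_eq_span_X_pow, Submodule.map_span, hIco, Finset.coe_image,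
    Finset.coe_range]
  simp only [Set.image_image, fourierRow_arith_eq_grsEval_X_pow hω]

theorem sum_fourierRow_mul_fourierRow_eq_zero (hω : IsPrimitiveRoot ω n) {i j : ZMod n}
    (hij : i + j ≠ 0) : ∑ m, fourierRow n ω i m * fourierRow n ω j m = 0 := by
  have hne : ω ^ (i.val + j.val) ≠ 1 := by
    rwa [Ne, hω.pow_eq_one_iff_dvd, ← ZMod.natCast_eq_zero_iff, Nat.cast_add,
      ZMod.natCast_zmod_val, ZMod.natCast_zmod_val]
  calc ∑ m, fourierRow n ω i m * fourierRow n ω j m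
      = ∑ m : Fin n, (ω ^ (i.val + j.val)) ^ m.val := by
        simp only [fourierRow, ← pow_add, ← pow_mul, add_mul]
    _ = ∑ m ∈ Finset.range n, (ω ^ (i.val + j.val)) ^ m :=
        Fin.sum_univ_eq_sum_range (fun m => (ω ^ (i.val + j.val)) ^ m) n
    _ = 0 := by rw [geom_sum_eq hne, pow_right_comm, hω.pow_eq_one, one_pow, sub_self, zero_div]

theorem sum_fourierRow_mul_eq_zero_of_mem_span (hω : IsPrimitiveRoot ω n) {S : Set (ZMod n)}
    {j : ZMod n} (hj : -j ∉ S) {v : Fin n → F}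
    (hv : v ∈ Submodule.span F (fourierRow n ω '' S)) : ∑ m, fourierRow n ω j m * v m = 0 := by
  induction hv using Submodule.span_induction with
  | mem v hv =>
    obtain ⟨i, hi, rfl⟩ := hv
    refine sum_fourierRow_mul_fourierRow_eq_zero hω fun hji => hj ?_
    rwa [neg_eq_of_add_eq_zero_right hji]
  | zero => simp
  | add u v _ _ hu hv => simp [mul_add, Finset.sum_add_distrib, hu, hv]
  | smul c v _ hv => simp [mul_left_comm _ c, ← Finset.mul_sum, hv]

theorem span_fourierRow_inf_dualCode_eq_bot (hω : IsPrimitiveRoot ω n) {S : Set (ZMod n)}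
    (hS : ∀ i ∈ S, -i ∈ S) :
    Submodule.span F (fourierRow n ω '' S) ⊓
      dualCode (Submodule.span F (fourierRow n ω '' S)) = ⊥ := by
  refine eq_bot_iff.mpr fun v ⟨hv, hdual⟩ =>
    eq_zero_of_forall_sum_fourierRow_mul_eq_zero hω fun j => ?_
  by_cases hj : j ∈ S
  · exact hdual _ (Submodule.subset_span (Set.mem_image_of_mem _ hj))
  · exact sum_fourierRow_mul_eq_zero_of_mem_span hω (fun h => hj (neg_neg j ▸ hS _ h)) hv

end FourierRows

/-- For `gcd(k, n) = 1` and `2r + 1 ≤ n`, the span of the `2r+1` rows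
`e_{(i·k) mod n}` for `i = −r, …, −1, 0, 1, …, r` is an LCD MDS code of length `n`,
dimension `2r+1` and minimum distance `n − 2r`. -/
theorem span_arith_symmetric_LCD_MDS {F : Type*} [Field F] (n : ℕ) [NeZero n] (ω : F)
    (hω1 : ω ^ n = 1) (hωprim : ∀ i : ℕ, 1 ≤ i → i < n → ω ^ i ≠ 1)
    (k : ℤ) (hk : Int.gcd k n = 1) (r : ℕ) (hr : 2 * r + 1 ≤ n)
    (C : Submodule F (Fin n → F))
    (hC : C = Submodule.span F (fourierRow n ω ''
      ((fun i : ℤ => ((i * k : ℤ) : ZMod n)) '' {i : ℤ | -(r : ℤ) ≤ i ∧ i ≤ (r : ℤ)}))) :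
    Module.finrank F C = 2 * r + 1 ∧ minDist C = n - 2 * r ∧ C ⊓ dualCode C = ⊥ := by
  have hω : IsPrimitiveRoot ω n := .mk_of_lt ω (NeZero.pos n) hω1 hωprim
  have hz : IsPrimitiveRoot (ω ^ k) n := hω.zpow_of_gcd_eq_one k hk
  have hpoints := injective_pow_val_of_isPrimitiveRoot hz
  have hweights (m : Fin n) : ((ω ^ k) ^ m.val) ^ (-r : ℤ) ≠ 0 :=
    zpow_ne_zero _ (pow_ne_zero _ (hz.ne_zero (NeZero.ne n)))
  have hgrs : C = grsCode (fun m => ((ω ^ k) ^ m.val) ^ (-r : ℤ))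
      (fun m => (ω ^ k) ^ m.val) (2 * r + 1) := by
    rw [hC, ← span_fourierRow_arith_eq_grsCode hω1 k (-r)]
    congr 3
    ext i
    simp only [Set.mem_ofPred_eq, Set.mem_Ico]
    omega
  refine ⟨?_, ?_, ?_⟩
  · rw [hgrs, finrank_grsCode hweights hpoints hr]
  · rw [hgrs, minDist_grsCode hweights hpoints (by omega) hr]
    omega
  · rw [hC]
    refine span_fourierRow_inf_dualCode_eq_bot hω ?_
    rintro _ ⟨i, ⟨hi, hi'⟩, rfl⟩
    exact ⟨-i, ⟨by omega, by omega⟩, by simp⟩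
end

section
/- Let F be a finite field with q elements, let n be even with n ∣ (q − 1), and let r be odd with 0 < r < n. Then there exists a linear code C ⊆ F^n with dim C = r, minimum distance n − r + 1, and C ∩ C^⊥ = {0}; that is, an LCD MDS (n, r, n−r+1) code exists over F. -/
/-! A generalized Reed–Solomon code with evaluation points `a` is MDS because a nonzero polynomial
of degree `< r` has fewer than `r` roots, and the nodal polynomial of `r - 1` of the points attains
the bound. Take `a m = z ^ m` with `z` a primitive `n`-th root of unity and column multipliers
`(z ^ m) ^ t`, so that the code is spanned by the vectors `((z ^ m) ^ e)_m` with `t ≤ e < t + r`.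
By orthogonality of the characters `m ↦ z ^ (m * e)`, two of these vectors pair to `n ≠ 0` if their
exponents sum to `0` modulo `n`, and to `0` otherwise. Hence the code meets its dual trivially once
the exponent interval is stable under negation modulo `n`, that is, once `2 * t + r - 1` is
divisible by `n`. -/

open Polynomial Finset

theorem exists_isPrimitiveRoot_of_dvd_card_sub_one (F : Type*) [Field F] [Fintype F] {n : ℕ}
    (hdvd : n ∣ Fintype.card F - 1) : ∃ z : F, IsPrimitiveRoot z n := by
  classical
  obtain ⟨g, hg⟩ := IsCyclic.exists_ofOrder_eq_natCard (α := Fˣ)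
  rw [Nat.card_eq_fintype_card, Fintype.card_units] at hg
  obtain ⟨c, hc⟩ := hdvd
  have hcard : 0 < Fintype.card F - 1 := Nat.sub_pos_of_lt Fintype.one_lt_card
  have hgc : IsPrimitiveRoot (g ^ c) n :=
    (hg ▸ IsPrimitiveRoot.orderOf g).pow hcard (hc.trans (mul_comm n c))
  exact ⟨_, IsPrimitiveRoot.coe_units_iff.2 hgc⟩

section RootsOfUnity

variable {R : Type*} [CommRing R] [IsDomain R] {n : ℕ} {z : R}

theorem sum_pow_pow_of_isPrimitiveRoot (hz : IsPrimitiveRoot z n) (k : ℕ) :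
    ∑ m : Fin n, (z ^ (m : ℕ)) ^ k = if n ∣ k then (n : R) else 0 := by
  simp_rw [pow_right_comm z _ k, Fin.sum_univ_eq_sum_range fun m => (z ^ k) ^ m]
  split_ifs with hk
  · simp [(hz.pow_eq_one_iff_dvd k).2 hk]
  · have hzk : z ^ k - 1 ≠ 0 := sub_ne_zero.2 fun h => hk ((hz.pow_eq_one_iff_dvd k).1 h)
    refine (mul_eq_zero.1 ?_).resolve_left hzk
    rw [mul_geom_sum, pow_right_comm, hz.pow_eq_one, one_pow, sub_self]

theorem sum_pow_mul_eval_of_isPrimitiveRoot (hz : IsPrimitiveRoot z n) {f : R[X]}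
    (hf : f ∈ degreeLT R n) {j k : ℕ} (hj : j < n) (hjk : n ∣ k + j) :
    ∑ m : Fin n, (z ^ (m : ℕ)) ^ k * f.eval (z ^ (m : ℕ)) = n * f.coeff j := by
  have hdvd_iff {i : ℕ} (hi : i < n) : n ∣ k + i ↔ i = j := by
    refine ⟨fun hik => ?_, fun h => h ▸ hjk⟩
    have hmod : k + i ≡ k + j [MOD n] :=
      (Nat.modEq_zero_iff_dvd.2 hik).trans (Nat.modEq_zero_iff_dvd.2 hjk).symm
    exact (Nat.ModEq.add_left_cancel' k hmod).eq_of_lt_of_lt hi hj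
  calc ∑ m : Fin n, (z ^ (m : ℕ)) ^ k * f.eval (z ^ (m : ℕ))
      = ∑ m : Fin n, ∑ i : Fin n, f.coeff i * (z ^ (m : ℕ)) ^ (k + i) := by
        refine sum_congr rfl fun m _ => ?_
        rw [eval_eq_sum_degreeLTEquiv hf, mul_sum]
        refine sum_congr rfl fun i _ => ?_
        simp only [degreeLTEquiv, LinearEquiv.coe_mk, LinearMap.coe_mk, AddHom.coe_mk]
        ring
    _ = ∑ i : Fin n, f.coeff i * ∑ m : Fin n, (z ^ (m : ℕ)) ^ (k + i) := by
        rw [sum_comm]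
        simp_rw [mul_sum]
    _ = ∑ i : Fin n, if i = ⟨j, hj⟩ then n * f.coeff i else 0 := by
        refine sum_congr rfl fun i _ => ?_
        simp only [sum_pow_pow_of_isPrimitiveRoot hz, hdvd_iff i.2, Fin.ext_iff, ite_mul,
          zero_mul, mul_comm (f.coeff _)]
    _ = n * f.coeff j := by simp

end RootsOfUnity

theorem exists_two_mul_add_modEq_one {n r : ℕ} (hn : 0 < n) (hodd : Odd n ∨ Odd r) :
    ∃ t, 2 * t + r ≡ 1 [MOD n] := by
  suffices h : ∃ t c, 2 * t + r = n * c + 1 by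
    obtain ⟨t, c, htc⟩ := h
    exact ⟨t, by simp [htc, Nat.ModEq]⟩
  rcases hodd with ⟨k, rfl⟩ | ⟨s, rfl⟩
  · -- Modulo `n = 2 * k + 1`, `k + 1` is the inverse of `2` and `2 * k` is `-1`.
    exact ⟨(k + 1) * (2 * k * r + 1), 2 * k * r + 1 + r, by ring⟩
  · obtain ⟨k, rfl⟩ := Nat.exists_eq_add_one.2 hn
    exact ⟨k * s, 2 * s, by ring⟩

section Codes

variable {F : Type*} [Field F] {n : ℕ}

theorem hWeight_add_card_filter_eq_zero [DecidableEq F] (v : Fin n → F) :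
    hWeight v + #{m | v m = 0} = n := by
  classical
  have h := card_filter_add_card_filter_not (s := (univ : Finset (Fin n))) (v · = 0)
  rw [card_univ, Fintype.card_fin, add_comm] at h
  unfold hWeight
  convert h

theorem minDist_eq_of_forall_le_of_exists_le {C : Submodule F (Fin n → F)} {d : ℕ}
    (hlower : ∀ v ∈ C, v ≠ 0 → d ≤ hWeight v) (hupper : ∃ v ∈ C, v ≠ 0 ∧ hWeight v ≤ d) :
    minDist C = d := by
  obtain ⟨v, hvC, hv0, hvd⟩ := hupper
  refine IsLeast.csInf_eq ⟨⟨v, hvC, hv0, hvd.antisymm (hlower v hvC hv0)⟩, ?_⟩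
  rintro _ ⟨w, hwC, hw0, rfl⟩
  exact hlower w hwC hw0

/-- The linear map sending a polynomial `f` to the word `(v m * f (a m))_m`, whose restriction to
degree `< r` encodes messages in the generalized Reed–Solomon code with evaluation points `a` and
column multipliers `v`. -/
noncomputable def weightedEval (a v : Fin n → F) : F[X] →ₗ[F] (Fin n → F) :=
  LinearMap.pi fun m => v m • leval (a m)

@[simp]
theorem weightedEval_apply (a v : Fin n → F) (f : F[X]) (m : Fin n) :
    weightedEval a v f m = v m * f.eval (a m) :=
  rfl

/-- The generalized Reed–Solomon code of all words `(v m * f (a m))_m` with `deg f < r`. As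
encoded here, the evaluation points `a` may coincide and the multipliers `v` may vanish. -/
noncomputable def generalizedReedSolomon (a v : Fin n → F) (r : ℕ) : Submodule F (Fin n → F) :=
  (degreeLT F r).map (weightedEval a v)

variable {a v : Fin n → F} {r : ℕ}

theorem card_filter_weightedEval_eq_zero_lt [DecidableEq F] (ha : Function.Injective a)
    (hv : ∀ m, v m ≠ 0) {f : F[X]} (hf : f ∈ degreeLT F r) (hf0 : f ≠ 0) :
    #{m | weightedEval a v f m = 0} < r := by
  contrapose! hf0
  refine eq_zero_of_degree_lt_of_eval_index_eq_zero _ ha.injOn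
    ((mem_degreeLT.1 hf).trans_le (Nat.cast_le.2 hf0)) fun m hm => ?_
  simpa [hv m] using hm

theorem eq_zero_of_weightedEval_eq_zero (ha : Function.Injective a) (hv : ∀ m, v m ≠ 0)
    {f : F[X]} (hf : f ∈ degreeLT F n) (hfw : weightedEval a v f = 0) : f = 0 := by
  classical
  by_contra hf0
  have hzeros := card_filter_weightedEval_eq_zero_lt ha hv hf hf0
  simp [hfw, -weightedEval_apply] at hzeros

theorem finrank_generalizedReedSolomon (ha : Function.Injective a) (hv : ∀ m, v m ≠ 0)
    (hrn : r ≤ n) : Module.finrank F (generalizedReedSolomon a v r) = r := by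
  have hinj : Function.Injective ((weightedEval a v).domRestrict (degreeLT F r)) := by
    refine (injective_iff_map_eq_zero _).2 fun f hf => Subtype.ext ?_
    exact eq_zero_of_weightedEval_eq_zero ha hv (degreeLT_mono hrn f.2) hf
  rw [generalizedReedSolomon, ← LinearMap.range_domRestrict, LinearMap.finrank_range_of_inj hinj,
    Module.finrank_eq_card_basis (degreeLT.basis F r), Fintype.card_fin]

theorem lt_hWeight_add_of_mem_generalizedReedSolomon (ha : Function.Injective a)
    (hv : ∀ m, v m ≠ 0) {w : Fin n → F} (hw : w ∈ generalizedReedSolomon a v r) (hw0 : w ≠ 0) :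
    n < hWeight w + r := by
  classical
  obtain ⟨f, hf, rfl⟩ := hw
  have hf0 : f ≠ 0 := by
    rintro rfl
    exact hw0 (map_zero _)
  have hzeros := card_filter_weightedEval_eq_zero_lt ha hv hf hf0
  have hweight := hWeight_add_card_filter_eq_zero (weightedEval a v f)
  omega

theorem exists_mem_generalizedReedSolomon_hWeight_add_le (ha : Function.Injective a)
    (hv : ∀ m, v m ≠ 0) (hr : 0 < r) (hrn : r ≤ n) :
    ∃ w ∈ generalizedReedSolomon a v r, w ≠ 0 ∧ hWeight w + r ≤ n + 1 := by
  classical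
  obtain ⟨s, -, hs⟩ := exists_subset_card_eq (s := (univ : Finset (Fin n))) (n := r - 1)
    (by rw [card_univ, Fintype.card_fin]; omega)
  have hmem : Lagrange.nodal s a ∈ degreeLT F r := by
    rw [mem_degreeLT, Lagrange.degree_nodal, hs]
    exact_mod_cast Nat.sub_one_lt_of_lt hr
  refine ⟨_, ⟨_, hmem, rfl⟩, fun hzero => Lagrange.nodal_ne_zero
    (eq_zero_of_weightedEval_eq_zero ha hv (degreeLT_mono hrn hmem) hzero), ?_⟩
  have hzeros : s ⊆ ({m | weightedEval a v (Lagrange.nodal s a) m = 0} : Finset (Fin n)) :=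
    fun m hm => by simp [Lagrange.eval_nodal_at_node hm]
  have hcard := card_le_card hzeros
  have hweight := hWeight_add_card_filter_eq_zero (weightedEval a v (Lagrange.nodal s a))
  omega

theorem minDist_generalizedReedSolomon (ha : Function.Injective a) (hv : ∀ m, v m ≠ 0)
    (hr : 0 < r) (hrn : r ≤ n) : minDist (generalizedReedSolomon a v r) = n - r + 1 := by
  refine minDist_eq_of_forall_le_of_exists_le (fun w hw hw0 => ?_) ?_
  · have hlower := lt_hWeight_add_of_mem_generalizedReedSolomon ha hv hw hw0
    omega
  · obtain ⟨w, hw, hw0, hupper⟩ :=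
      exists_mem_generalizedReedSolomon_hWeight_add_le ha hv hr hrn
    exact ⟨w, hw, hw0, by omega⟩

theorem generalizedReedSolomon_inf_dualCode_eq_bot {z : F} (hz : IsPrimitiveRoot z n) {t : ℕ}
    (hrn : r ≤ n) (ht : 2 * t + r ≡ 1 [MOD n]) :
    generalizedReedSolomon (fun m : Fin n => z ^ (m : ℕ)) (fun m => (z ^ (m : ℕ)) ^ t) r ⊓
      dualCode (generalizedReedSolomon (fun m : Fin n => z ^ (m : ℕ))
        (fun m => (z ^ (m : ℕ)) ^ t) r) = ⊥ := by
  rw [eq_bot_iff]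
  rintro _ ⟨⟨f, hf, rfl⟩, hdual⟩
  suffices hf0 : f = 0 by simp [hf0]
  ext j
  rw [coeff_zero]
  by_cases hj : r ≤ j
  · exact coeff_eq_zero_of_degree_lt ((mem_degreeLT.1 hf).trans_le (Nat.cast_le.2 hj))
  push Not at hj
  have : NeZero n := ⟨by omega⟩
  -- `t + (r - 1 - j)` is the exponent opposite to `t + j` modulo `n`.
  have hX : (X ^ (r - 1 - j) : F[X]) ∈ degreeLT F r := by
    rw [mem_degreeLT, degree_X_pow]
    exact_mod_cast (by omega : r - 1 - j < r)
  have hopp : n ∣ (2 * t + (r - 1 - j)) + j := by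
    have hsub := (Nat.modEq_iff_dvd' (by omega : 1 ≤ 2 * t + r)).1 ht.symm
    rwa [show 2 * t + (r - 1 - j) + j = 2 * t + r - 1 by omega]
  have hpair : (n : F) * f.coeff j = 0 := by
    rw [← sum_pow_mul_eval_of_isPrimitiveRoot hz (degreeLT_mono hrn hf) (hj.trans_le hrn) hopp,
      ← hdual _ ⟨_, hX, rfl⟩]
    refine sum_congr rfl fun m _ => ?_
    simp only [weightedEval_apply, eval_pow, eval_X]
    ring
  exact (mul_eq_zero.1 hpair).resolve_left hz.neZero'.out

end Codes

theorem exists_LCD_MDS_code_even_length_general {F : Type*} [Field F] {n r : ℕ} {z : F}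
    (hz : IsPrimitiveRoot z n) (hodd : Odd n ∨ Odd r) (hr0 : 0 < r) (hrn : r ≤ n) :
    ∃ C : Submodule F (Fin n → F),
      Module.finrank F C = r ∧ minDist C = n - r + 1 ∧ C ⊓ dualCode C = ⊥ := by
  have hn : 0 < n := hr0.trans_le hrn
  obtain ⟨t, ht⟩ := exists_two_mul_add_modEq_one hn hodd
  have hpoints : Function.Injective fun m : Fin n => z ^ (m : ℕ) :=
    fun m k hmk => Fin.ext (hz.pow_inj m.2 k.2 hmk)
  have hmultipliers (m : Fin n) : (z ^ (m : ℕ)) ^ t ≠ 0 :=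
    pow_ne_zero _ (pow_ne_zero _ (hz.ne_zero hn.ne'))
  exact ⟨_, finrank_generalizedReedSolomon hpoints hmultipliers hrn,
    minDist_generalizedReedSolomon hpoints hmultipliers hr0 hrn,
    generalizedReedSolomon_inf_dualCode_eq_bot hz hrn ht⟩

/-- Over a finite field `F` with `q` elements, for `n` even with
`n ∣ (q − 1)` and any odd `r` with `0 < r < n`, there exists an LCD MDS `(n, r, n−r+1)`
code over `F`. -/
theorem exists_LCD_MDS_code_even_length (F : Type*) [Field F] [Fintype F] (n r : ℕ)
    (hn : Even n) (hdvd : n ∣ Fintype.card F - 1) (hr : Odd r) (hr0 : 0 < r) (hrn : r < n) :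
    ∃ C : Submodule F (Fin n → F),
      Module.finrank F C = r ∧ minDist C = n - r + 1 ∧ C ⊓ dualCode C = ⊥ := by
  obtain ⟨z, hz⟩ := exists_isPrimitiveRoot_of_dvd_card_sub_one F hdvd
  exact exists_LCD_MDS_code_even_length_general hz (.inr hr) hr0 hrn.le
end
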